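/- arXiv:2405.11085 — 3 statements merged into one kernel-verified Lean document; each statement's English description precedes it below -/
import Mathlib

section
/- Let M be a d-dimensional affine continuous VASS all of whose transition matrices are non-negative self-loop matrices, let p(u) be a configuration, Y a set of counters, and let ρ = t₁,…,t_ℓ (with t_i = (p_{i−1}, A_i, b_i, p_i)) be a path in G_M from p to p (i.e., p₀ = p_ℓ = p) such that: (i) for every counter y and every index i with b_i(y) < 0, supp_{t_i}^-(y) ∩ (supp(u) ∪ ⋃_{1 ≤ j < i} supp_{t_j}^+) ≠ ∅; and (ii) for every y ∈ Y there exists an index i with supp_{t_i}^p(y) ∩ (supp(u) ∪ ⋃_{1 ≤ j ≤ ℓ} supp_{t_j}^+) ≠ ∅. Then there exists a firing sequence π that is p-admissible from p(u) and whose resulting run pumps all counters in Y. -/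
namespace ACVASS

/-- Vectors of rationals indexed by counters. -/
abbrev Vec (d : ℕ) := Fin d → ℚ

/-- A vector is componentwise non-negative (i.e. lies in ℚ₊^d). -/
def NonNeg {d : ℕ} (u : Vec d) : Prop := ∀ i, 0 ≤ u i

/-- Square integer matrices of dimension d. -/
abbrev Mat (d : ℕ) := Matrix (Fin d) (Fin d) ℤ

/-- Transitions of a d-dimensional affine continuous VASS. -/
abbrev Trans (Q : Type) (d : ℕ) := Q × Mat d × (Fin d → ℤ) × Q

def Trans.src {Q : Type} {d : ℕ} (t : Trans Q d) : Q := t.1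
def Trans.mat {Q : Type} {d : ℕ} (t : Trans Q d) : Mat d := t.2.1
def Trans.upd {Q : Type} {d : ℕ} (t : Trans Q d) : Fin d → ℤ := t.2.2.1
def Trans.tgt {Q : Type} {d : ℕ} (t : Trans Q d) : Q := t.2.2.2

/-- Cast an integer matrix to a rational matrix. -/
def castMat {d : ℕ} (A : Mat d) : Matrix (Fin d) (Fin d) ℚ := A.map (Int.cast)

/-- Cast an integer vector to a rational vector. -/
def castVec {d : ℕ} (b : Fin d → ℤ) : Vec d := fun i => (b i : ℚ)

/-- A d-dimensional affine continuous VASS: a finite set of transitions. -/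
structure ACV (Q : Type) (d : ℕ) where
  T : Finset (Trans Q d)

/-- Configurations: a state together with a vector of counter values. -/
abbrev Conf (Q : Type) (d : ℕ) := Q × Vec d

/-- A step `p(u) →^{αt} q(v)`: `t` is a transition of `M`, `α ∈ (0,1]`, both
configurations are non-negative and `v = A·u + α·b`. -/
def Step {Q : Type} {d : ℕ} (M : ACV Q d) (C : Conf Q d) (α : ℚ) (t : Trans Q d)
    (C' : Conf Q d) : Prop :=
  t ∈ M.T ∧ 0 < α ∧ α ≤ 1 ∧ C.1 = t.src ∧ C'.1 = t.tgt ∧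
    NonNeg C.2 ∧ NonNeg C'.2 ∧
    C'.2 = (castMat t.mat).mulVec C.2 + α • castVec t.upd

/-- Firing sequences. -/
abbrev FSeq (Q : Type) (d : ℕ) := List (ℚ × Trans Q d)

/-- `Run M C π C'` : `C →^π C'`, i.e. the steps of `π` can be realized in order. -/
inductive Run {Q : Type} {d : ℕ} (M : ACV Q d) : Conf Q d → FSeq Q d → Conf Q d → Prop
  | nil (C : Conf Q d) (h : NonNeg C.2) : Run M C [] C
  | cons {C C' C'' : Conf Q d} {α : ℚ} {t : Trans Q d} {π : FSeq Q d} :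
      Step M C α t C' → Run M C' π C'' → Run M C ((α, t) :: π) C''

/-- `C →* C'`. -/
def Reach {Q : Type} {d : ℕ} (M : ACV Q d) (C C' : Conf Q d) : Prop := ∃ π, Run M C π C'

/-- `p(u)` covers `q(v)`: `p(u) →* q(v')` for some `v' ≥ v`. -/
def Covers {Q : Type} {d : ℕ} (M : ACV Q d) (C C' : Conf Q d) : Prop :=
  ∃ v', C'.2 ≤ v' ∧ Reach M C (C'.1, v')

/-- Support of a vector. -/
def supp {d : ℕ} (u : Vec d) : Set (Fin d) := {i | u i ≠ 0}

/-- `supp_t^-(x) = {y : A(x,y) > 0}`. -/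
def suppMinus {Q : Type} {d : ℕ} (t : Trans Q d) (x : Fin d) : Set (Fin d) :=
  {y | 0 < t.mat x y}

/-- `supp_t^+ = {x : b(x) > 0}`. -/
def suppPlus {Q : Type} {d : ℕ} (t : Trans Q d) : Set (Fin d) := {x | 0 < t.upd x}

/-- `supp_t^p(x)`: counters that can pump `x` via transition `t`. -/
def suppPump {Q : Type} {d : ℕ} (t : Trans Q d) (x : Fin d) : Set (Fin d) :=
  {y | (y ≠ x ∧ 0 < t.mat x y) ∨ (y = x ∧ 1 < t.mat x y)}

/-- The set of transitions occurring in a firing sequence. -/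
def seqSupp {Q : Type} {d : ℕ} (π : FSeq Q d) : Set (Trans Q d) := {t | ∃ α, (α, t) ∈ π}

/-- Non-negative matrix. -/
def NonNegMat {d : ℕ} (A : Mat d) : Prop := ∀ i j, 0 ≤ A i j

/-- Non-negative self-loop matrix: non-negative with no zero diagonal entry. -/
def SelfLoopMat {d : ℕ} (A : Mat d) : Prop := NonNegMat A ∧ ∀ i, A i i ≠ 0

/-- All transition matrices of `M` are non-negative. -/
def NonNegVASS {Q : Type} {d : ℕ} (M : ACV Q d) : Prop := ∀ t ∈ M.T, NonNegMat t.mat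

/-- All transition matrices of `M` are non-negative self-loop matrices. -/
def SelfLoopVASS {Q : Type} {d : ℕ} (M : ACV Q d) : Prop := ∀ t ∈ M.T, SelfLoopMat t.mat

/-- `β·π`: scale all fractions of a firing sequence by `β`. -/
def scaleSeq {Q : Type} {d : ℕ} (β : ℚ) (π : FSeq Q d) : FSeq Q d :=
  π.map (fun p => (β * p.1, p.2))

/-- Counter `x` is pumped by transition `t` in the run obtained by firing `π` from `C`:
some step of the run uses `t` from a source configuration `C₁` with a counter
`y ∈ supp_t^p(x)` of positive value. -/
def PumpedBy {Q : Type} {d : ℕ} (M : ACV Q d) (C : Conf Q d) (π : FSeq Q d)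
    (t : Trans Q d) (x : Fin d) : Prop :=
  ∃ (π₁ : FSeq Q d) (α : ℚ) (π₂ : FSeq Q d) (C₁ C₂ : Conf Q d),
    π = π₁ ++ (α, t) :: π₂ ∧ Run M C π₁ C₁ ∧ Step M C₁ α t C₂ ∧
    ∃ y ∈ suppPump t x, 0 < C₁.2 y

/-- Counter `x` is pumped in the run obtained by firing `π` from `C`. -/
def Pumps {Q : Type} {d : ℕ} (M : ACV Q d) (C : Conf Q d) (π : FSeq Q d) (x : Fin d) : Prop :=
  ∃ t, PumpedBy M C π t x

/-- Edges of the support abstraction `SU_M`. -/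
def SuppEdge {Q : Type} {d : ℕ} (M : ACV Q d) (v : Q × Set (Fin d)) (t : Trans Q d)
    (v' : Q × Set (Fin d)) : Prop :=
  t ∈ M.T ∧ v.1 = t.src ∧ v'.1 = t.tgt ∧
    ∀ x : Fin d,
      (t.upd x < 0 → (suppMinus t x ∩ v.2).Nonempty) ∧
      (0 < t.upd x → x ∈ v'.2) ∧
      (x ∈ v'.2 → 0 < t.upd x ∨ (suppMinus t x ∩ v.2).Nonempty)

/-- Directed-path reachability in the support abstraction `SU_M`. -/
def SuppReach {Q : Type} {d : ℕ} (M : ACV Q d) :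
    Q × Set (Fin d) → Q × Set (Fin d) → Prop :=
  Relation.ReflTransGen (fun a b => ∃ t, SuppEdge M a t b)

/-- A step of the continuous VASS `M_X` (only the counters in `X` are tracked). -/
def StepX {Q : Type} {d : ℕ} (M : ACV Q d) (X : Set (Fin d)) (p : Q) (u : Vec d) (α : ℚ)
    (t : Trans Q d) (q : Q) (v : Vec d) : Prop :=
  t ∈ M.T ∧ 0 < α ∧ α ≤ 1 ∧ p = t.src ∧ q = t.tgt ∧
    (∀ i ∈ X, 0 ≤ u i) ∧ (∀ i ∈ X, 0 ≤ v i) ∧ (∀ i ∈ X, v i = u i + α * castVec t.upd i)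

/-- A run of the continuous VASS `M_X`; vectors matter only on the counters of `X`. -/
inductive RunX {Q : Type} {d : ℕ} (M : ACV Q d) (X : Set (Fin d)) :
    Q → Vec d → FSeq Q d → Q → Vec d → Prop
  | nil (p : Q) (u v : Vec d) (h : ∀ i ∈ X, 0 ≤ u i ∧ u i = v i) : RunX M X p u [] p v
  | cons {p r q : Q} {u w v : Vec d} {α : ℚ} {t : Trans Q d} {π : FSeq Q d} :
      StepX M X p u α t r w → RunX M X r w π q v → RunX M X p u ((α, t) :: π) q v

/-- One edge of the graph `G_M` using only transitions from `S`. -/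
def GStep {Q : Type} {d : ℕ} (S : Set (Trans Q d)) (a b : Q) : Prop :=
  ∃ t ∈ S, t.src = a ∧ t.tgt = b

/-- A (possibly empty) path in the graph `G_M` using only transitions from `S`. -/
def GPath {Q : Type} {d : ℕ} (S : Set (Trans Q d)) : Q → Q → Prop :=
  Relation.ReflTransGen (GStep S)

/-- `Rep-Half(π)`: the i-th fraction of `π` is divided by `2^i`. -/
def repHalf {Q : Type} {d : ℕ} : FSeq Q d → FSeq Q d
  | [] => []
  | (α, t) :: rest => (α / 2, t) :: scaleSeq (1 / 2) (repHalf rest)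

/-- Descending partial product `A_{ℓ-1} ⋯ A_j` (0-indexed); for `j = ℓ` this is
the identity matrix. -/
def descProd {d ℓ : ℕ} (A : Fin ℓ → Matrix (Fin d) (Fin d) ℚ) (j : ℕ) :
    Matrix (Fin d) (Fin d) ℚ :=
  (((List.finRange ℓ).drop j).reverse.map A).prod

/-- The permutation matrix `P_σ` with `P_σ(i,j) = 1` iff `σ(i) = j`. -/
def permMat {n : ℕ} (σ : Equiv.Perm (Fin n)) : Matrix (Fin n) (Fin n) ℤ :=
  Matrix.of fun i j => if σ i = j then 1 else 0

/-- A matrix is a permutation matrix. -/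
def IsPermMat {d : ℕ} (A : Mat d) : Prop := ∃ σ : Equiv.Perm (Fin d), A = permMat σ

/-- The n×n block-diagonal matrix with blocks `I_o`, `A`, `I_{n-o-k}`:
`A` occupies rows/columns `o,…,o+k-1` and the rest is identity. -/
def applyBlock {k : ℕ} (A : Matrix (Fin k) (Fin k) ℤ) (o n : ℕ) :
    Matrix (Fin n) (Fin n) ℤ :=
  Matrix.of fun r c =>
    if h : o ≤ r.val ∧ r.val < o + k ∧ o ≤ c.val ∧ c.val < o + k then
      A ⟨r.val - o, by omega⟩ ⟨c.val - o, by omega⟩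
    else if r.val = c.val then 1 else 0

/-- Transitions of a continuous VASS (with identity matrices left implicit). -/
abbrev CTrans (Q : Type) (d : ℕ) := Q × (Fin d → ℤ) × Q

/-- Zero-tests. -/
abbrev ZTest (Q : Type) (d : ℕ) := Q × Fin d × Q

/-- A d-dimensional continuous VASS with zero-tests. -/
structure CVZ (Q : Type) (d : ℕ) where
  T : Finset (CTrans Q d)
  T0 : Finset (ZTest Q d)

/-- A transition step of a continuous VASS with zero-tests. -/
def CStep {Q : Type} {d : ℕ} (M : CVZ Q d) (C : Conf Q d) (α : ℚ) (t : CTrans Q d)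
    (C' : Conf Q d) : Prop :=
  t ∈ M.T ∧ 0 < α ∧ α ≤ 1 ∧ C.1 = t.1 ∧ C'.1 = t.2.2 ∧
    NonNeg C.2 ∧ NonNeg C'.2 ∧ C'.2 = C.2 + α • castVec t.2.1

/-- A zero-test step of a continuous VASS with zero-tests. -/
def ZStep {Q : Type} {d : ℕ} (M : CVZ Q d) (C : Conf Q d) (t : ZTest Q d)
    (C' : Conf Q d) : Prop :=
  t ∈ M.T0 ∧ C.1 = t.1 ∧ C'.1 = t.2.2 ∧ NonNeg C.2 ∧ C.2 t.2.1 = 0 ∧ C'.2 = C.2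

/-- A d-dimensional continuous VASS. -/
structure CV (Q : Type) (d : ℕ) where
  T : Finset (CTrans Q d)

/-- A step of a continuous VASS. -/
def CVStep {Q : Type} {d : ℕ} (M : CV Q d) (C : Conf Q d) (α : ℚ) (t : CTrans Q d)
    (C' : Conf Q d) : Prop :=
  t ∈ M.T ∧ 0 < α ∧ α ≤ 1 ∧ C.1 = t.1 ∧ C'.1 = t.2.2 ∧
    NonNeg C.2 ∧ NonNeg C'.2 ∧ C'.2 = C.2 + α • castVec t.2.1

/-- Reachability (`→*`) in a continuous VASS. -/
def CVReach {Q : Type} {d : ℕ} (M : CV Q d) : Conf Q d → Conf Q d → Prop :=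
  Relation.ReflTransGen (fun C C' => ∃ α t, CVStep M C α t C')


theorem aux_step {Q : Type} {d : ℕ} (M : ACV Q d) (hM : SelfLoopVASS M)
    (t : Trans Q d) (ht : t ∈ M.T) (w : Vec d) (hw : NonNeg w)
    (h : ∀ y, t.upd y < 0 → ∃ x, 0 < t.mat y x ∧ 0 < w x) :
    ∃ (α : ℚ) (v : Vec d), Step M (t.src, w) α t (t.tgt, v) ∧ NonNeg v ∧
      (∀ x, 0 < w x → 0 < v x) ∧ (∀ x, 0 < t.upd x → 0 < v x) := by
  obtain ⟨hA, hD⟩ := hM t ht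
  have hterm : ∀ x y, 0 ≤ castMat t.mat x y * w y := fun x y =>
    mul_nonneg (by simpa [castMat] using hA x y) (hw y)
  have hge : ∀ x y, castMat t.mat x y * w y ≤ (castMat t.mat).mulVec w x := fun x y =>
    Finset.single_le_sum (f := fun y => castMat t.mat x y * w y)
      (fun i _ => hterm x i) (Finset.mem_univ y)
  have hge1 : ∀ x, w x ≤ (castMat t.mat).mulVec w x := by
    intro x
    refine le_trans ?_ (hge x x)
    have h1 : (1 : ℚ) ≤ castMat t.mat x x := by
      have : (1 : ℤ) ≤ t.mat x x := by
        have := hA x x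
        have := hD x
        omega
      simp only [castMat, Matrix.map_apply]
      exact_mod_cast this
    nlinarith [hw x]
  have key : ∀ x, ∀ᶠ α in nhdsWithin (0 : ℚ) (Set.Ioi 0),
      t.upd x < 0 → 0 < (castMat t.mat).mulVec w x + α * (t.upd x : ℚ) := by
    intro x
    by_cases hx : t.upd x < 0
    · obtain ⟨y, hy, hwy⟩ := h x hx
      have hs : 0 < (castMat t.mat).mulVec w x := by
        refine lt_of_lt_of_le (mul_pos ?_ hwy) (hge x y)
        simpa [castMat] using hy
      have hb : (0 : ℚ) < -(t.upd x : ℚ) := by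
        have : (t.upd x : ℚ) < 0 := by exact_mod_cast hx
        linarith
      filter_upwards [Ioo_mem_nhdsGT (div_pos hs hb)] with α hα _
      have := (lt_div_iff₀ hb).1 hα.2
      linarith
    · exact Filter.Eventually.of_forall fun α h' => absurd h' hx
  obtain ⟨α, hα, hα01⟩ := ((Filter.eventually_all.2 key).and
    (Ioo_mem_nhdsGT (zero_lt_one (α := ℚ)))).exists
  have hv : ∀ x, 0 ≤ t.upd x →
      w x + α * (t.upd x : ℚ) ≤ (castMat t.mat).mulVec w x + α * (t.upd x : ℚ) :=
    fun x _ => by linarith [hge1 x]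
  have hm : ∀ x, 0 ≤ t.upd x → 0 ≤ α * (t.upd x : ℚ) := fun x hx =>
    mul_nonneg hα01.1.le (by exact_mod_cast hx)
  have hnn : NonNeg ((castMat t.mat).mulVec w + α • castVec t.upd) := by
    intro x
    simp only [Pi.add_apply, Pi.smul_apply, castVec, smul_eq_mul]
    by_cases hx : t.upd x < 0
    · exact (hα x hx).le
    · push Not at hx
      linarith [hv x hx, hm x hx, hw x]
  refine ⟨α, (castMat t.mat).mulVec w + α • castVec t.upd,
    ⟨ht, hα01.1, hα01.2.le, rfl, rfl, hw, hnn, rfl⟩, hnn, ?_, ?_⟩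
  · intro x hwx
    simp only [Pi.add_apply, Pi.smul_apply, castVec, smul_eq_mul]
    by_cases hx : t.upd x < 0
    · exact hα x hx
    · push Not at hx
      linarith [hv x hx, hm x hx]
  · intro x hx
    simp only [Pi.add_apply, Pi.smul_apply, castVec, smul_eq_mul]
    have h2 : 0 < α * (t.upd x : ℚ) := mul_pos hα01.1 (by exact_mod_cast hx)
    linarith [hv x hx.le, hw x]

theorem Run.append {Q : Type} {d : ℕ} {M : ACV Q d} {C C' C'' : Conf Q d} {π π' : FSeq Q d}
    (h : Run M C π C') (h' : Run M C' π' C'') : Run M C (π ++ π') C'' := by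
  induction h with
  | nil C h => exact h'
  | cons s _ ih => exact Run.cons s (ih h')

theorem aux_path {Q : Type} {d : ℕ} (M : ACV Q d) (hM : SelfLoopVASS M)
    (p : Q) (u : Vec d) (hu : NonNeg u)
    (ℓ : ℕ) (ts : Fin ℓ → Trans Q d) (ps : Fin (ℓ + 1) → Q)
    (hmem : ∀ i, ts i ∈ M.T)
    (hsrc : ∀ i : Fin ℓ, (ts i).src = ps i.castSucc)
    (htgt : ∀ i : Fin ℓ, (ts i).tgt = ps i.succ)
    (h0 : ps 0 = p)
    (hdec : ∀ (y : Fin d) (i : Fin ℓ), (ts i).upd y < 0 →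
      (suppMinus (ts i) y ∩
        (supp u ∪ ⋃ j ∈ {j : Fin ℓ | j < i}, suppPlus (ts j))).Nonempty)
    (w : Vec d) (hw : NonNeg w) (huw : ∀ x, 0 < u x → 0 < w x)
    (k : ℕ) (hk : k < ℓ + 1) :
    ∃ (π : FSeq Q d) (z : Vec d), Run M (p, w) π (ps ⟨k, hk⟩, z) ∧ NonNeg z ∧
      (∀ x, 0 < w x → 0 < z x) ∧
      (∀ j : Fin ℓ, j.1 < k → ∀ x, 0 < (ts j).upd x → 0 < z x) ∧
      (∀ j : Fin ℓ, j.1 < k → ∃ (π₁ : FSeq Q d) (α : ℚ) (π₂ : FSeq Q d) (C₁ C₂ : Conf Q d),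
        π = π₁ ++ (α, ts j) :: π₂ ∧ Run M (p, w) π₁ C₁ ∧ Step M C₁ α (ts j) C₂ ∧
        ∀ x, 0 < w x → 0 < C₁.2 x) := by
  induction k with
  | zero =>
    refine ⟨[], w, ?_, hw, fun _ h => h, fun j h => absurd h (by omega),
      fun j h => absurd h (by omega)⟩
    have : ps ⟨0, hk⟩ = p := h0
    rw [this]
    exact Run.nil _ hw
  | succ k ih =>
    obtain ⟨π, z, hrun, hz, hwz, hplus, hp⟩ := ih (by omega)
    let i : Fin ℓ := ⟨k, by omega⟩
    obtain ⟨α, v, hstep, hv, hzv, hbv⟩ := aux_step M hM (ts i) (hmem i) z hz (by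
      intro y hy
      obtain ⟨x, hx, hx'⟩ := hdec y i hy
      refine ⟨x, hx, ?_⟩
      rcases hx' with hx' | hx'
      · exact hwz x (huw x (lt_of_le_of_ne (hu x) (Ne.symm hx')))
      · simp only [Set.mem_iUnion, Set.mem_setOf_eq] at hx'
        obtain ⟨j, hj, hjx⟩ := hx'
        exact hplus j hj x hjx)
    have hs : (ts i).src = ps ⟨k, by omega⟩ := hsrc i
    have hT : (ts i).tgt = ps ⟨k + 1, hk⟩ := htgt i
    rw [hs, hT] at hstep
    refine ⟨π ++ [(α, ts i)], v, hrun.append (Run.cons hstep (Run.nil _ hv)), hv,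
      fun x hx => hzv x (hwz x hx), ?_, ?_⟩
    · intro j hj x hx
      by_cases hjk : j.1 < k
      · exact hzv x (hplus j hjk x hx)
      · have : j = i := Fin.ext (by simp only [i]; omega)
        subst this
        exact hbv x hx
    · intro j hj
      by_cases hjk : j.1 < k
      · obtain ⟨π₁, β, π₂, C₁, C₂, he, hr, hst, hpos⟩ := hp j hjk
        exact ⟨π₁, β, π₂ ++ [(α, ts i)], C₁, C₂, by simp [he], hr, hst, hpos⟩
      · have : j = i := Fin.ext (by simp only [i]; omega)
        subst this
        exact ⟨π, α, [], _, _, rfl, hrun, hstep, hwz⟩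

/-- a sufficient condition for the existence of a p-admissible
firing sequence pumping all counters of `Y`. -/
theorem admissible_pumping_sufficient
    {Q : Type} [Fintype Q] {d : ℕ} (M : ACV Q d) (hM : SelfLoopVASS M)
    (p : Q) (u : Vec d) (hu : NonNeg u) (Y : Set (Fin d))
    (ℓ : ℕ) (ts : Fin ℓ → Trans Q d) (ps : Fin (ℓ + 1) → Q)
    (hmem : ∀ i, ts i ∈ M.T)
    (hsrc : ∀ i : Fin ℓ, (ts i).src = ps i.castSucc)
    (htgt : ∀ i : Fin ℓ, (ts i).tgt = ps i.succ)
    (h0 : ps 0 = p) (hlast : ps (Fin.last ℓ) = p)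
    (hdec : ∀ (y : Fin d) (i : Fin ℓ), (ts i).upd y < 0 →
      (suppMinus (ts i) y ∩
        (supp u ∪ ⋃ j ∈ {j : Fin ℓ | j < i}, suppPlus (ts j))).Nonempty)
    (hpump : ∀ y ∈ Y, ∃ i : Fin ℓ,
      (suppPump (ts i) y ∩ (supp u ∪ ⋃ j : Fin ℓ, suppPlus (ts j))).Nonempty) :
    ∃ (π : FSeq Q d) (z : Vec d), Run M (p, u) π (p, z) ∧
      ∀ y ∈ Y, Pumps M (p, u) π y := by
  obtain ⟨π, z, hrun, hz, huz, hplus, -⟩ := aux_path M hM p u hu ℓ ts ps hmem hsrc htgt h0 hdec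
    u hu (fun _ h => h) ℓ (Nat.lt_succ_self ℓ)
  obtain ⟨π', z', hrun', -, -, -, hp⟩ := aux_path M hM p u hu ℓ ts ps hmem hsrc htgt h0 hdec
    z hz huz ℓ (Nat.lt_succ_self ℓ)
  have hl : ps ⟨ℓ, Nat.lt_succ_self ℓ⟩ = p := hlast
  rw [hl] at hrun hrun'
  refine ⟨π ++ π', z', hrun.append hrun', ?_⟩
  intro y hy
  obtain ⟨i, x, hx, hx'⟩ := hpump y hy
  obtain ⟨π₁, α, π₂, C₁, C₂, he, hr, hst, hpos⟩ := hp i i.2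
  refine ⟨ts i, π ++ π₁, α, π₂, C₁, C₂, by simp [he], hrun.append hr, hst, x, hx, hpos x ?_⟩
  rcases hx' with hx' | hx'
  · exact huz x (lt_of_le_of_ne (hu x) (Ne.symm hx'))
  · obtain ⟨j, hj⟩ := Set.mem_iUnion.1 hx'
    exact hplus j j.2 x hj
end ACVASS
end

section
/- Let M be a d-dimensional affine continuous VASS all of whose transition matrices are non-negative self-loop matrices, and suppose p(u) →^π p(v) is a run with π = α₁t₁,…,α_ℓ t_ℓ. Let Rep-Half(π) = (α₁/2)t₁, (α₂/4)t₂, …, (α_ℓ/2^ℓ)t_ℓ. Then there is a run p(u) →^{Rep-Half(π)} p(w) for some w with supp(u) ⊆ supp(w), and for every transition t occurring in π and every counter x: (i) if x is additively incremented by t, then w(x) > 0; (ii) if x is additively decremented by t, then supp_t^-(x) ∩ supp(w) ≠ ∅; (iii) if x was pumped by t in the run p(u) →^π p(v), then supp_t^p(x) ∩ supp(w) ≠ ∅. -/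
namespace ACVASS

theorem exists_pos_of_mulVec {d : ℕ} (A : Mat d) (hA : NonNegMat A) (u : Vec d) (hu : NonNeg u)
    (x : Fin d) (h : 0 < (castMat A).mulVec u x) : ∃ y, 0 < A x y ∧ 0 < u y := by
  by_contra hc
  push Not at hc
  have : (castMat A).mulVec u x ≤ 0 := by
    unfold Matrix.mulVec dotProduct
    apply Finset.sum_nonpos
    intro y _
    rcases (hA x y).lt_or_eq with h1 | h1
    · have h2 : u y = 0 := le_antisymm (hc y h1) (hu y)
      simp [h2]
    · simp [castMat, ← h1]
  linarith

theorem mulVec_mono' {d : ℕ} (A : Mat d) (hA : NonNegMat A) (u w : Vec d) (h : ∀ i, u i ≤ w i)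
    (x : Fin d) : (castMat A).mulVec u x ≤ (castMat A).mulVec w x := by
  unfold Matrix.mulVec dotProduct
  apply Finset.sum_le_sum
  intro y _
  have : (0 : ℚ) ≤ castMat A x y := by
    simp only [castMat, Matrix.map_apply]
    exact_mod_cast hA x y
  exact mul_le_mul_of_nonneg_left (h y) this

theorem le_mulVec {d : ℕ} (A : Mat d) (hA : SelfLoopMat A) (w : Vec d) (h : NonNeg w)
    (x : Fin d) : w x ≤ (castMat A).mulVec w x := by
  have hn : ∀ y, (0 : ℚ) ≤ castMat A x y := by
    intro y
    simp only [castMat, Matrix.map_apply]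
    exact_mod_cast hA.1 x y
  have h1 : (1 : ℚ) ≤ castMat A x x := by
    simp only [castMat, Matrix.map_apply]
    have h2 := hA.1 x x
    have h3 := hA.2 x
    have : 1 ≤ A x x := by omega
    exact_mod_cast this
  calc w x ≤ castMat A x x * w x := le_mul_of_one_le_left (h x) h1
    _ ≤ _ := by
      unfold Matrix.mulVec dotProduct
      exact Finset.single_le_sum (f := fun y => castMat A x y * w y)
        (fun y _ => mul_nonneg (hn y) (h y)) (Finset.mem_univ x)

theorem scaleSeq_cons_repHalf {Q : Type} {d : ℕ} (β α : ℚ) (t : Trans Q d) (π : FSeq Q d) :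
    scaleSeq β (repHalf ((α, t) :: π)) = (β * (α / 2), t) :: scaleSeq (β / 2) (repHalf π) := by
  simp only [repHalf, scaleSeq, List.map_cons, List.map_map, List.cons.injEq, true_and]
  apply List.map_congr_left
  intro a _
  simp only [Function.comp, Prod.mk.injEq, and_true]
  ring

theorem repHalf_aux {Q : Type} {d : ℕ} (M : ACV Q d) (hM : SelfLoopVASS M)
    (C C' : Conf Q d) (π : FSeq Q d) (hrun : Run M C π C') :
    ∀ (β : ℚ) (w' : Vec d), 0 < β → β ≤ 1 → (∀ x, β * C.2 x ≤ w' x) → NonNeg w' →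
    ∃ w : Vec d, Run M (C.1, w') (scaleSeq β (repHalf π)) (C'.1, w) ∧
      (∀ x, 0 < w' x → 0 < w x) ∧
      ∀ t ∈ seqSupp π, ∀ x : Fin d,
        (0 < t.upd x → 0 < w x) ∧
        (t.upd x < 0 → ∃ y ∈ suppMinus t x, 0 < w y) ∧
        (PumpedBy M C π t x → ∃ y ∈ suppPump t x, 0 < w y) := by
  induction hrun with
  | nil C h =>
    intro β w' h0 h1 hw hn
    refine ⟨w', Run.nil _ hn, fun x h => h, ?_⟩
    rintro t ⟨α, ht⟩
    simp at ht
  | @cons C C₁ C₂ α t π hs hr ih =>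
    intro β w' h0 h1 hw hn
    have hs' := hs
    obtain ⟨htM, hα0, hα1, hsrc, htgt, hC, hC1, heq⟩ := hs'
    have hA := hM t htM
    set w1 : Vec d := (castMat t.mat).mulVec w' + (β * (α / 2)) • castVec t.upd with hw1
    have eq1 : ∀ x, C₁.2 x = (castMat t.mat).mulVec C.2 x + α * (t.upd x : ℚ) := by
      intro x; rw [heq]; simp [castVec]
    have eq2 : ∀ x, w1 x = (castMat t.mat).mulVec w' x + (β * (α / 2)) * (t.upd x : ℚ) := by
      intro x; simp [hw1, castVec]
    have m1 : ∀ x, β * (castMat t.mat).mulVec C.2 x ≤ (castMat t.mat).mulVec w' x := by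
      intro x
      have := mulVec_mono' t.mat hA.1 (β • C.2) w' (by intro i; simpa using hw i) x
      rwa [Matrix.mulVec_smul] at this
    have m2 := le_mulVec t.mat hA w' hn
    have key : ∀ x, w' x / 2 + β / 2 * C₁.2 x ≤ w1 x := by
      intro x
      rw [eq1, eq2]
      have a1 := m1 x
      have a2 := m2 x
      linarith
    have hp : ∀ x, 0 ≤ β / 2 * C₁.2 x := fun x => mul_nonneg (by linarith) (hC1 x)
    have hn1 : NonNeg w1 := fun x => by linarith [key x, hp x, hn x]
    have hw1' : ∀ x, 0 < w' x → 0 < w1 x := fun x h => by linarith [key x, hp x]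
    obtain ⟨w, hrw, hsw, hprop⟩ := ih (β / 2) w1 (by linarith) (by linarith)
      (fun x => by linarith [key x, hn x]) hn1
    have hCw : ∀ x, 0 < C.2 x → 0 < w x := fun x h =>
      hsw x (hw1' x (lt_of_lt_of_le (mul_pos h0 h) (hw x)))
    refine ⟨w, ?_, fun x h => hsw x (hw1' x h), ?_⟩
    · rw [scaleSeq_cons_repHalf]
      refine Run.cons (C' := (C₁.1, w1)) ⟨htM, by positivity, ?_, hsrc, htgt, hn, hn1, rfl⟩ hrw
      nlinarith
    · rintro t' ht' x
      have hnn : ∀ x, 0 ≤ (castMat t.mat).mulVec C.2 x := fun x =>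
        (hC x).trans (le_mulVec t.mat hA C.2 hC x)
      have hcase : t' = t ∨ t' ∈ seqSupp π := by
        obtain ⟨a, ha⟩ := ht'
        rcases List.mem_cons.1 ha with h | h
        · left; exact (Prod.ext_iff.1 h).2
        · right; exact ⟨a, h⟩
      refine ⟨fun hb => ?_, fun hb => ?_, ?_⟩
      · rcases hcase with rfl | h
        · apply hsw
          have hb' : (0 : ℚ) < t'.upd x := by exact_mod_cast hb
          have h3 : 0 < C₁.2 x := by
            rw [eq1]; have := hnn x; positivity
          have : 0 < β / 2 * C₁.2 x := by positivity
          linarith [key x, hn x]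
        · exact (hprop t' h x).1 hb
      · rcases hcase with rfl | h
        · have hb' : (t'.upd x : ℚ) < 0 := by exact_mod_cast hb
          have h3 : 0 < (castMat t'.mat).mulVec C.2 x := by
            have := hC1 x
            rw [eq1] at this
            nlinarith
          obtain ⟨y, hy, hy'⟩ := exists_pos_of_mulVec _ hA.1 _ hC x h3
          exact ⟨y, hy, hCw y hy'⟩
        · exact (hprop t' h x).2.1 hb
      · rintro ⟨π₁, a, π₂, D, D', hπ, hR, hS, y, hy, hy'⟩
        cases hR with
        | nil _ _ => exact ⟨y, hy, hCw y hy'⟩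
        | @cons _ E _ a' s π₁' hS' hR' =>
          simp only [List.cons_append, List.cons.injEq, Prod.mk.injEq] at hπ
          obtain ⟨⟨rfl, rfl⟩, rfl⟩ := hπ
          have hE : E = C₁ := by
            obtain ⟨_, _, _, _, e1, _, _, e2⟩ := hS'
            exact Prod.ext (e1.trans htgt.symm) (e2.trans heq.symm)
          subst hE
          exact (hprop t' ⟨a, by simp⟩ x).2.2 ⟨π₁', a, π₂, D, D', rfl, hR', hS, y, hy, hy'⟩

theorem run_nonNeg_src {Q : Type} {d : ℕ} {M : ACV Q d} {C C' : Conf Q d} {π : FSeq Q d}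
    (h : Run M C π C') : NonNeg C.2 := by
  cases h with
  | nil _ h => exact h
  | cons hs _ => exact hs.2.2.2.2.2.1

theorem scaleSeq_one {Q : Type} {d : ℕ} (π : FSeq Q d) : scaleSeq 1 π = π := by
  simp [scaleSeq]

/-- properties of the `Rep-Half` firing sequence. -/
theorem repHalf_run
    {Q : Type} [Fintype Q] {d : ℕ} (M : ACV Q d) (hM : SelfLoopVASS M)
    (p : Q) (u v : Vec d) (π : FSeq Q d) (hrun : Run M (p, u) π (p, v)) :
    ∃ w : Vec d, Run M (p, u) (repHalf π) (p, w) ∧ supp u ⊆ supp w ∧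
      ∀ t ∈ seqSupp π, ∀ x : Fin d,
        (0 < t.upd x → 0 < w x) ∧
        (t.upd x < 0 → (suppMinus t x ∩ supp w).Nonempty) ∧
        (PumpedBy M (p, u) π t x → (suppPump t x ∩ supp w).Nonempty) := by
  have hu : NonNeg u := run_nonNeg_src hrun
  obtain ⟨w, hr, hs, hp⟩ := repHalf_aux M hM _ _ π hrun 1 u one_pos le_rfl
    (fun x => by simp) hu
  rw [scaleSeq_one] at hr
  refine ⟨w, hr, fun x hx => (hs x (lt_of_le_of_ne (hu x) (Ne.symm hx))).ne', ?_⟩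
  intro t ht x
  obtain ⟨h1, h2, h3⟩ := hp t ht x
  refine ⟨h1, fun h => ?_, fun h => ?_⟩
  · obtain ⟨y, hy, hy'⟩ := h2 h
    exact ⟨y, hy, hy'.ne'⟩
  · obtain ⟨y, hy, hy'⟩ := h3 h
    exact ⟨y, hy, hy'.ne'⟩

end ACVASS
end

section
/- Let M be a d-dimensional affine continuous VASS all of whose transition matrices are non-negative self-loop matrices. If p(u) →^π q(v) is a run, then for every rational α ∈ (0,1] there exists v' ∈ ℚ₊^d with v' ≥ α·v + (1−α)·u componentwise such that p(u) →^{α·π} q(v'). -/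
namespace ACVASS

theorem mulVec_aux {d : ℕ} (A : Mat d) (hA : SelfLoopMat A) (u e w : Vec d) (α : ℚ)
    (he : NonNeg e) (h : ∀ i, α * u i + e i ≤ w i) (i : Fin d) :
    α * (castMat A).mulVec u i + e i ≤ (castMat A).mulVec w i := by
  have hnn : ∀ j, (0 : ℚ) ≤ castMat A i j := fun j => by
    have := hA.1 i j
    simp only [castMat, Matrix.map_apply]
    exact_mod_cast this
  have h1 : (1 : ℚ) ≤ castMat A i i := by
    have h0 := hA.1 i i
    have h2 := hA.2 i
    have : 1 ≤ A i i := by omega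
    simp only [castMat, Matrix.map_apply]
    exact_mod_cast this
  have h3 : e i ≤ ∑ j, castMat A i j * e j := by
    calc e i ≤ castMat A i i * e i := le_mul_of_one_le_left (he i) h1
      _ ≤ _ := Finset.single_le_sum (f := fun j => castMat A i j * e j)
        (fun j _ => mul_nonneg (hnn j) (he j)) (Finset.mem_univ i)
  have h4 : ∑ j, castMat A i j * (α * u j + e j) ≤ ∑ j, castMat A i j * w j :=
    Finset.sum_le_sum fun j _ => mul_le_mul_of_nonneg_left (h j) (hnn j)
  have h5 : ∑ j, castMat A i j * (α * u j + e j)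
      = α * ∑ j, castMat A i j * u j + ∑ j, castMat A i j * e j := by
    rw [Finset.mul_sum, ← Finset.sum_add_distrib]
    exact Finset.sum_congr rfl fun j _ => by ring
  simp only [Matrix.mulVec, dotProduct]
  linarith

theorem run_scale_aux {Q : Type} {d : ℕ} (M : ACV Q d) (hM : SelfLoopVASS M)
    (α : ℚ) (hα0 : 0 < α) (hα1 : α ≤ 1) (e : Vec d) (he : NonNeg e)
    {C C' : Conf Q d} {π : FSeq Q d} (hrun : Run M C π C') :
    ∀ w : Vec d, NonNeg w → (∀ i, α * C.2 i + e i ≤ w i) →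
    ∃ v' : Vec d, NonNeg v' ∧ (∀ i, α * C'.2 i + e i ≤ v' i) ∧
      Run M (C.1, w) (scaleSeq α π) (C'.1, v') := by
  induction hrun with
  | nil C h => exact fun w hw hle => ⟨w, hw, hle, Run.nil _ hw⟩
  | @cons C C1 C2 β t π hs _ ih =>
    intro w hw hle
    obtain ⟨ht, hb0, hb1, hsrc, htgt, hn, hn', heq⟩ := hs
    have key : ∀ i, α * C1.2 i + e i ≤
        ((castMat t.mat).mulVec w + (α * β) • castVec t.upd) i := fun i => by
      have := mulVec_aux t.mat (hM t ht) C.2 e w α he hle i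
      rw [heq]
      simp only [Pi.add_apply, Pi.smul_apply, smul_eq_mul]
      linarith
    have hw' : NonNeg ((castMat t.mat).mulVec w + (α * β) • castVec t.upd) := fun i =>
      le_trans (add_nonneg (mul_nonneg hα0.le (hn' i)) (he i)) (key i)
    obtain ⟨v', h1, h2, h3⟩ := ih _ hw' key
    exact ⟨v', h1, h2, Run.cons (C' := (C1.1, (castMat t.mat).mulVec w + (α * β) • castVec t.upd))
      ⟨ht, mul_pos hα0 hb0, mul_le_one₀ hα1 hb0.le hb1, hsrc, htgt, hw, hw', rfl⟩ h3⟩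

/-- firing a scaled-down sequence from the same start. -/
theorem run_scale_same_start
    {Q : Type} [Fintype Q] {d : ℕ} (M : ACV Q d) (hM : SelfLoopVASS M)
    (p q : Q) (u v : Vec d) (π : FSeq Q d) (hrun : Run M (p, u) π (q, v))
    (α : ℚ) (hα0 : 0 < α) (hα1 : α ≤ 1) :
    ∃ v' : Vec d, NonNeg v' ∧ α • v + (1 - α) • u ≤ v' ∧
      Run M (p, u) (scaleSeq α π) (q, v') := by
  have hu : NonNeg u := by
    cases hrun with
    | nil _ h => exact h
    | cons hs _ => exact hs.2.2.2.2.2.1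
  obtain ⟨v', h1, h2, h3⟩ := run_scale_aux M hM α hα0 hα1 ((1 - α) • u)
    (fun i => mul_nonneg (by linarith) (hu i)) hrun u hu (fun i => by
      simp only [Pi.smul_apply, smul_eq_mul]; linarith)
  exact ⟨v', h1, fun i => h2 i, h3⟩

end ACVASS
end
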